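/- Let β₁, β₂ be real numbers with β₁ > 0, β₂ < 1 and β₁ + β₂ > 1/2, and let z be a real number with 0 < z < 1, and set u = (1+z)²/(4z) (so u > 1). Then ∫₀^z x^{β₁+β₂−3/2} (x² + 2(1−2u)x + 1)^{−β₂} dx = Γ(β₁+β₂−1/2) Γ(1−β₂) / Γ(β₁+1/2) · (4u)^{−(β₁+β₂−1/2)} · ₂F₁(β₁+β₂−1/2, β₁; 2β₁; 1/u). (Note x² + 2(1−2u)x + 1 = (z−x)(1/z−x) > 0 for 0 < x < z, so the integrand is well defined, and 0 < 1/u < 1.) -/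

import Mathlib

open MeasureTheory

/-- Pochhammer symbol `(x)_n` in `ℝ`. -/
noncomputable def rpoch (x : ℝ) (n : ℕ) : ℝ := (ascPochhammer ℝ n).eval x

/-- Gauss' hypergeometric series `₂F₁` (real). -/
noncomputable def hyp2F1 (a b c z : ℝ) : ℝ :=
  ∑' n : ℕ, rpoch a n * rpoch b n / (rpoch c n * (n.factorial : ℝ)) * z ^ n

/-!
Put `L x = 4 * x / (1 + x) ^ 2`, so that `1 / u = L z` and the quadratic factor of the integrand is
`(1 + x) ^ 2 * (1 - u * L x)`. The substitution `s = u * L x` turns the integral into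
`∫ s in (0, 1), s ^ (a - 1) * (1 - s) ^ (d - 1) * ₂F₁ β₁ (β₁ + 1 / 2) (2 * β₁) (s / u)` with
`a = β₁ + β₂ - 1 / 2` and `d = 1 - β₂`, because `₂F₁ b (b + 1 / 2) (2 * b) (L x)` is the algebraic
function `(1 + x) ^ (2 * b) / (1 - x)`. Since `a + d = β₁ + 1 / 2`, integrating term by term against
the beta kernel replaces the parameter `β₁ + 1 / 2` by `a` (Bateman's integral).

For the algebraic evaluation, multiply by `(1 + x) ^ (-2 * b)` and expand every power of `1 + x`
for small `x`: the coefficient of `x ^ m` is the `m`-th finite difference of a monic polynomial of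
degree `m` divided by `m!`, so the series is geometric. Analytic continuation gives all of `[0, 1)`.
-/

open Finset.HasAntidiagonal (antidiagonal mem_antidiagonal)
open Set (Icc Ico Ioo)
open scoped Nat Topology

section Pochhammer

lemma ascPochhammer_eval_add {R : Type*} [CommSemiring R] (a : R) (m n : ℕ) :
    (ascPochhammer R (m + n)).eval a =
      (ascPochhammer R m).eval a * (ascPochhammer R n).eval (a + m) := by
  simp [← ascPochhammer_mul]

lemma ascPochhammer_eval_two_mul {K : Type*} [Field K] [NeZero (2 : K)] (a : K) (n : ℕ) :
    (ascPochhammer K (2 * n)).eval (2 * a) =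
      4 ^ n * (ascPochhammer K n).eval a * (ascPochhammer K n).eval (a + 1 / 2) := by
  induction n with
  | zero => simp
  | succ n ih =>
    have two_ne_zero : (2 : K) ≠ 0 := NeZero.ne 2
    rw [mul_add_one, ascPochhammer_succ_eval, ascPochhammer_succ_eval, ih, ascPochhammer_succ_eval,
      ascPochhammer_succ_eval]
    push_cast
    field_simp
    ring

open Polynomial in
lemma sum_antidiagonal_neg_one_pow_mul_choose_mul_ascPochhammer {R : Type*} [CommRing R]
    [IsDomain R] (c : R) (m : ℕ) :
    ∑ p ∈ antidiagonal m, (-1) ^ p.2 * m.choose p.1 * (ascPochhammer R m).eval (c + p.1) =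
      (m ! : R) := by
  let P : R[X] := (ascPochhammer R m).comp (X + C c)
  have natDegree_P : P.natDegree = m := by
    rw [natDegree_comp, ascPochhammer_natDegree, natDegree_X_add_C, mul_one]
  have leadingCoeff_P : P.leadingCoeff = 1 := (monic_ascPochhammer R m).comp_X_add_C c
  have fwdDiff_P := congrFun P.fwdDiff_iter_degree_eq_factorial 0
  rw [natDegree_P, leadingCoeff_P, fwdDiff_iter_eq_sum_shift] at fwdDiff_P
  rw [Finset.Nat.sum_antidiagonal_eq_sum_range_succ
    (fun i j ↦ (-1) ^ j * (m.choose i : R) * (ascPochhammer R m).eval (c + i))]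
  simpa [P, add_comm c] using fwdDiff_P

lemma sum_antidiagonal_ascPochhammer_div_factorial {K : Type*} [Field K] [CharZero K] (c : K)
    (m : ℕ) :
    ∑ p ∈ antidiagonal m, (ascPochhammer K p.1).eval (c + p.1) / p.1 ! *
      ((-1) ^ p.2 * ((ascPochhammer K p.2).eval (c + 2 * p.1) / p.2 !)) = 1 := by
  have factorial_ne_zero (k : ℕ) : (k ! : K) ≠ 0 := mod_cast k.factorial_ne_zero
  refine mul_right_cancel₀ (factorial_ne_zero m) ?_
  rw [one_mul, Finset.sum_mul]
  refine Eq.trans ?_ (sum_antidiagonal_neg_one_pow_mul_choose_mul_ascPochhammer c m)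
  refine Finset.sum_congr rfl fun ⟨i, j⟩ hij ↦ ?_
  obtain rfl : i + j = m := mem_antidiagonal.1 hij
  rw [ascPochhammer_eval_add, Nat.cast_add_choose, add_assoc c, ← two_mul]
  field_simp [factorial_ne_zero]

lemma abs_ascPochhammer_eval_le {a b : ℝ} (hab : |a| ≤ b) (n : ℕ) :
    |(ascPochhammer ℝ n).eval a| ≤ (ascPochhammer ℝ n).eval b := by
  induction n with
  | zero => simp
  | succ n ih =>
    rw [ascPochhammer_succ_eval, ascPochhammer_succ_eval, abs_mul]
    have abs_add_natCast_le : |a + n| ≤ b + n := by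
      simpa using (abs_add_le a n).trans (add_le_add_left hab |(n : ℝ)|)
    exact mul_le_mul ih abs_add_natCast_le (abs_nonneg _) ((abs_nonneg _).trans ih)

lemma gamma_add_natCast {a : ℝ} (ha : ∀ k : ℕ, a ≠ -k) (n : ℕ) :
    Real.Gamma (a + n) = (ascPochhammer ℝ n).eval a * Real.Gamma a := by
  induction n with
  | zero => simp
  | succ n ih =>
    have ha_add : a + n ≠ 0 := fun h ↦ ha n (eq_neg_of_add_eq_zero_left h)
    rw [Nat.cast_succ, ← add_assoc, Real.Gamma_add_one ha_add, ih, ascPochhammer_succ_eval]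
    ring

lemma mem_eball_zero_one {x : ℝ} (hx : |x| < 1) : x ∈ Metric.eball (0 : ℝ) 1 := by
  simpa [Metric.mem_eball, edist_zero_right, enorm_eq_nnnorm, ← NNReal.coe_lt_one] using hx

lemma hasSum_ascPochhammer_div_factorial_mul_pow (a : ℝ) {x : ℝ} (hx : |x| < 1) :
    HasSum (fun n ↦ (ascPochhammer ℝ n).eval a / n ! * x ^ n) ((1 - x) ^ (-a)) := by
  have h := (Real.one_div_one_sub_rpow_hasFPowerSeriesOnBall_zero a).hasSum (mem_eball_zero_one hx)
  have choose_eq (n : ℕ) :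
      Ring.choose (a + n - 1) n = (ascPochhammer ℝ n).eval a / n ! := by
    rw [← Ring.multichoose_eq, eq_div_iff (by positivity), mul_comm, ← nsmul_eq_mul,
      Ring.factorial_nsmul_multichoose_eq_ascPochhammer, Polynomial.ascPochhammer_smeval_eq_eval]
  have one_sub_nonneg : 0 ≤ 1 - x := by linarith [(abs_lt.1 hx).2]
  simpa [FormalMultilinearSeries.ofScalars_apply_eq, choose_eq, Real.rpow_neg one_sub_nonneg,
    mul_comm] using h

end Pochhammer

section OrdinaryHypergeometric

lemma one_le_radius_ordinaryHypergeometricSeries (a b c : ℝ) :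
    1 ≤ (ordinaryHypergeometricSeries ℝ a b c).radius := by
  by_cases h : ∀ k : ℕ, (k : ℝ) ≠ -a ∧ (k : ℝ) ≠ -b ∧ (k : ℝ) ≠ -c
  · exact (ordinaryHypergeometricSeries_radius_eq_one ℝ a b c h).ge
  · push Not at h
    obtain ⟨k, hk⟩ := h
    have eq_neg_natCast : a = -k ∨ b = -k ∨ c = -k := by grind
    rcases eq_neg_natCast with rfl | rfl | rfl
    · simp [ordinaryHypergeometric_radius_top_of_neg_nat₁]
    · simp [ordinaryHypergeometric_radius_top_of_neg_nat₂]
    · simp [ordinaryHypergeometric_radius_top_of_neg_nat₃]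

lemma hasFPowerSeriesOnBall_ordinaryHypergeometric (a b c : ℝ) :
    HasFPowerSeriesOnBall (₂F₁ a b c) (ordinaryHypergeometricSeries ℝ a b c) 0 1 :=
  ((ordinaryHypergeometricSeries ℝ a b c).hasFPowerSeriesOnBall
    (one_pos.trans_le (one_le_radius_ordinaryHypergeometricSeries a b c))).mono one_pos
    (one_le_radius_ordinaryHypergeometricSeries a b c)

lemma hasSum_ordinaryHypergeometric (a b c : ℝ) {x : ℝ} (hx : |x| < 1) :
    HasSum (fun n ↦ ordinaryHypergeometricCoefficient a b c n * x ^ n) (₂F₁ a b c x) := by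
  have h := (hasFPowerSeriesOnBall_ordinaryHypergeometric a b c).hasSum (mem_eball_zero_one hx)
  simpa only [ordinaryHypergeometricSeries_apply_eq, zero_add, smul_eq_mul] using h

lemma ordinaryHypergeometric_comm (a b c : ℝ) : ₂F₁ a b c = (₂F₁ b a c : ℝ → ℝ) := by
  unfold ordinaryHypergeometric
  rw [ordinaryHypergeometricSeries_symm]

lemma analyticAt_ordinaryHypergeometric (a b c : ℝ) {x : ℝ} (hx : |x| < 1) :
    AnalyticAt ℝ (₂F₁ a b c) x :=
  (hasFPowerSeriesOnBall_ordinaryHypergeometric a b c).analyticAt_of_mem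
    (mem_eball_zero_one hx)

end OrdinaryHypergeometric

section Landen

lemma ordinaryHypergeometricCoefficient_add_half_mul_four_pow {b : ℝ} (hb : ∀ k : ℕ, 2 * b ≠ -k)
    (n : ℕ) :
    ordinaryHypergeometricCoefficient b (b + 1 / 2) (2 * b) n * 4 ^ n =
      (ascPochhammer ℝ n).eval (2 * b + n) / n ! := by
  have ascPochhammer_ne_zero : (ascPochhammer ℝ n).eval (2 * b) ≠ 0 := by
    rw [Ne, ascPochhammer_eval_eq_zero_iff]
    rintro ⟨k, -, hk⟩
    exact hb k (eq_neg_of_add_eq_zero_left (by linarith))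
  have duplication := ascPochhammer_eval_two_mul b n
  rw [two_mul n, ascPochhammer_eval_add] at duplication
  rw [ordinaryHypergeometricCoefficient, eq_div_iff (by positivity), mul_right_comm _ (4 ^ n)]
  refine mul_left_cancel₀ ascPochhammer_ne_zero ?_
  rw [duplication]
  generalize (ascPochhammer ℝ n).eval (2 * b) = d at *
  field_simp

/-- The general term of the double series obtained from
`∑ n, (c + n)_n / n! * x ^ n * (1 + x) ^ (-(c + 2 * n))` by expanding each power of `1 + x`. -/
noncomputable def landenDoubleTerm (c x : ℝ) (p : ℕ × ℕ) : ℝ :=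
  (ascPochhammer ℝ p.1).eval (c + p.1) / p.1 ! * x ^ p.1 *
    ((ascPochhammer ℝ p.2).eval (c + 2 * p.1) / p.2 ! * (-x) ^ p.2)

lemma hasSum_landenDoubleTerm_mk (c : ℝ) {x : ℝ} (hx : |x| < 1) (n : ℕ) :
    HasSum (fun k ↦ landenDoubleTerm c x (n, k))
      ((ascPochhammer ℝ n).eval (c + n) / n ! * x ^ n * (1 + x) ^ (-(c + 2 * n))) := by
  have h := hasSum_ascPochhammer_div_factorial_mul_pow (c + 2 * n) (x := -x) (by rwa [abs_neg])
  rw [sub_neg_eq_add] at h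
  exact h.mul_left _

lemma sum_antidiagonal_landenDoubleTerm (c x : ℝ) (m : ℕ) :
    ∑ p ∈ antidiagonal m, landenDoubleTerm c x p = x ^ m := by
  rw [← one_mul (x ^ m), ← sum_antidiagonal_ascPochhammer_div_factorial c m, Finset.sum_mul]
  refine Finset.sum_congr rfl fun p hp ↦ ?_
  rw [landenDoubleTerm, neg_pow, ← mem_antidiagonal.1 hp, pow_add]
  ring

lemma rpow_neg_add_two_mul {y : ℝ} (hy : 0 < y) (c : ℝ) (n : ℕ) :
    y ^ (-(c + 2 * n)) = y ^ (-c) * (1 / y ^ 2) ^ n := by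
  rw [neg_add, Real.rpow_add hy, Real.rpow_neg hy.le (2 * n), Real.rpow_mul hy.le,
    Real.rpow_natCast, one_div, inv_pow]
  norm_num

lemma summable_landenDoubleTerm {c x : ℝ} (hx : |x| < 1)
    (hs : Summable fun n : ℕ ↦
      |(ascPochhammer ℝ n).eval (c + n) / n ! * (x / (1 - |x|) ^ 2) ^ n|) :
    Summable (landenDoubleTerm c x) := by
  have one_sub_abs_pos : 0 < 1 - |x| := sub_pos.2 hx
  let majorant (p : ℕ × ℕ) : ℝ := |(ascPochhammer ℝ p.1).eval (c + p.1) / p.1 ! * x ^ p.1| *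
    ((ascPochhammer ℝ p.2).eval (|c| + 2 * p.1) / p.2 ! * |x| ^ p.2)
  have landenDoubleTerm_le (p : ℕ × ℕ) : ‖landenDoubleTerm c x p‖ ≤ majorant p := by
    have ascPochhammer_le : |(ascPochhammer ℝ p.2).eval (c + 2 * p.1)| ≤
        (ascPochhammer ℝ p.2).eval (|c| + 2 * p.1) :=
      abs_ascPochhammer_eval_le (by simpa using abs_add_le c (2 * p.1)) _
    rw [landenDoubleTerm, norm_mul, Real.norm_eq_abs, Real.norm_eq_abs, abs_mul (_ / _) ((-x) ^ _),
      abs_div _ (p.2 ! : ℝ), abs_pow, abs_neg, Nat.abs_cast]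
    exact mul_le_mul_of_nonneg_left (by gcongr) (abs_nonneg _)
  have hasSum_majorant_mk (n : ℕ) : HasSum (fun k ↦ majorant (n, k))
      ((1 - |x|) ^ (-|c|) *
        |(ascPochhammer ℝ n).eval (c + n) / n ! * (x / (1 - |x|) ^ 2) ^ n|) := by
    have h := (hasSum_ascPochhammer_div_factorial_mul_pow (|c| + 2 * n) (x := |x|)
      (by rwa [abs_abs])).mul_left |(ascPochhammer ℝ n).eval (c + n) / n ! * x ^ n|
    rw [rpow_neg_add_two_mul one_sub_abs_pos, mul_left_comm] at h
    rw [div_eq_mul_one_div x, mul_pow, ← mul_assoc, abs_mul,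
      abs_of_nonneg (by positivity : 0 ≤ (1 / (1 - |x|) ^ 2) ^ n)]
    exact h
  refine .of_norm_bounded ((summable_prod_of_nonneg fun p ↦
    (norm_nonneg _).trans (landenDoubleTerm_le p)).2
      ⟨fun n ↦ (hasSum_majorant_mk n).summable, ?_⟩) landenDoubleTerm_le
  simpa only [(hasSum_majorant_mk _).tsum_eq] using hs.mul_left _

lemma hasSum_pow_mul_one_add_rpow {c x : ℝ} (hx : |x| < 1) (hs : Summable (landenDoubleTerm c x)) :
    HasSum (fun n : ℕ ↦ (ascPochhammer ℝ n).eval (c + n) / n ! * x ^ n * (1 + x) ^ (-(c + 2 * n)))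
      (1 - x)⁻¹ := by
  have hasSum_antidiagonal : HasSum (fun m ↦ x ^ m) (∑' p, landenDoubleTerm c x p) := by
    have h := (Finset.HasAntidiagonal.sigmaAntidiagonalEquivProd.hasSum_iff.2 hs.hasSum).sigma
      fun m ↦ hasSum_fintype _
    refine h.congr_fun fun m ↦ ?_
    rw [← sum_antidiagonal_landenDoubleTerm c x m]
    exact (Finset.sum_finset_coe (landenDoubleTerm c x) (antidiagonal m)).symm
  rw [(hasSum_geometric_of_abs_lt_one hx).unique hasSum_antidiagonal]
  exact hs.hasSum.prod_fiberwise (hasSum_landenDoubleTerm_mk c hx)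

lemma hasSum_ascPochhammer_add_natCast_div_factorial_mul_pow {b y : ℝ} (hb : ∀ k : ℕ, 2 * b ≠ -k)
    (hy : |4 * y| < 1) :
    HasSum (fun n : ℕ ↦ (ascPochhammer ℝ n).eval (2 * b + n) / n ! * y ^ n)
      (₂F₁ b (b + 1 / 2) (2 * b) (4 * y)) := by
  refine (hasSum_ordinaryHypergeometric b (b + 1 / 2) (2 * b) hy).congr_fun fun n ↦ ?_
  rw [mul_pow, ← mul_assoc, ordinaryHypergeometricCoefficient_add_half_mul_four_pow hb]

/-- The quadratic map `x ↦ 4x / (1 + x)²`: the substitution of Landen's transformation, sending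
`(0, 1)` increasingly onto itself. In the theorem, `1 / u` is its value at `z`. -/
noncomputable def landenMap (x : ℝ) : ℝ := 4 * x / (1 + x) ^ 2

lemma one_sub_landenMap {x : ℝ} (hx : x ≠ -1) : 1 - landenMap x = ((1 - x) / (1 + x)) ^ 2 := by
  have one_add_ne_zero : 1 + x ≠ 0 := by grind
  rw [landenMap]
  field_simp
  ring

lemma hasDerivAt_landenMap {x : ℝ} (hx : x ≠ -1) :
    HasDerivAt landenMap (4 * (1 - x) / (1 + x) ^ 3) x := by
  have one_add_ne_zero : 1 + x ≠ 0 := by grind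
  have h := ((hasDerivAt_id x).const_mul 4).div (((hasDerivAt_id x).const_add 1).fun_pow 2)
    (pow_ne_zero 2 one_add_ne_zero)
  refine h.congr_deriv ?_
  simp only [id]
  field_simp
  ring

lemma continuousOn_landenMap : ContinuousOn landenMap (Icc 0 1) := fun _ hx ↦
  (hasDerivAt_landenMap (by linarith [hx.1])).continuousAt.continuousWithinAt

lemma strictMonoOn_landenMap : StrictMonoOn landenMap (Icc 0 1) := by
  refine strictMonoOn_of_deriv_pos (convex_Icc 0 1) continuousOn_landenMap fun x hx ↦ ?_
  rw [interior_Icc] at hx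
  have x_pos : 0 < x := hx.1
  have one_sub_pos : 0 < 1 - x := sub_pos.2 hx.2
  rw [(hasDerivAt_landenMap (by linarith)).deriv]
  positivity

lemma abs_landenMap_lt_one {x : ℝ} (hx : x ∈ Ico 0 1) : |landenMap x| < 1 := by
  have x_nonneg : 0 ≤ x := hx.1
  have one_sub_pos : 0 < 1 - x := sub_pos.2 hx.2
  have one_sub_landenMap_pos : 0 < 1 - landenMap x := by
    rw [one_sub_landenMap (by linarith)]
    positivity
  rw [abs_of_nonneg (by rw [landenMap]; positivity)]
  linarith

lemma ordinaryHypergeometric_landenMap_of_four_mul_abs_lt {b x : ℝ} (hb : ∀ k : ℕ, 2 * b ≠ -k)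
    (hx1 : |x| < 1) (hx : 4 * |x| < (1 - |x|) ^ 2) :
    ₂F₁ b (b + 1 / 2) (2 * b) (landenMap x) = (1 + x) ^ (2 * b) / (1 - x) := by
  have one_sub_abs_pos : 0 < 1 - |x| := sub_pos.2 hx1
  have one_sub_abs_le : 1 - |x| ≤ 1 + x := by linarith [neg_abs_le x]
  have one_add_pos : 0 < 1 + x := one_sub_abs_pos.trans_le one_sub_abs_le
  have summable_landenDoubleTerm_two_mul : Summable (landenDoubleTerm (2 * b) x) := by
    refine summable_landenDoubleTerm hx1
      (hasSum_ascPochhammer_add_natCast_div_factorial_mul_pow hb ?_).summable.abs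
    rwa [← mul_div_assoc, abs_div, abs_mul, Nat.abs_ofNat, abs_pow, abs_of_pos one_sub_abs_pos,
      div_lt_one (by positivity)]
  have abs_lt : |4 * (x / (1 + x) ^ 2)| < 1 := by
    rw [← mul_div_assoc, abs_div, abs_mul, Nat.abs_ofNat, abs_pow, abs_of_pos one_add_pos,
      div_lt_one (by positivity)]
    exact hx.trans_le (by gcongr)
  have h := (hasSum_ascPochhammer_add_natCast_div_factorial_mul_pow hb abs_lt).mul_left
    ((1 + x) ^ (-(2 * b)))
  have one_add_rpow_mul_eq := h.unique
    ((hasSum_pow_mul_one_add_rpow hx1 summable_landenDoubleTerm_two_mul).congr_fun fun n ↦ by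
      rw [rpow_neg_add_two_mul one_add_pos, div_eq_mul_one_div x, mul_pow]; ring)
  rw [landenMap, mul_div_assoc, div_eq_mul_inv (_ ^ _), ← one_add_rpow_mul_eq,
    ← mul_assoc, ← Real.rpow_add one_add_pos, add_neg_cancel, Real.rpow_zero, one_mul]

theorem ordinaryHypergeometric_landenMap {b x : ℝ} (hb : ∀ k : ℕ, 2 * b ≠ -k)
    (hx : x ∈ Ico 0 1) :
    ₂F₁ b (b + 1 / 2) (2 * b) (landenMap x) = (1 + x) ^ (2 * b) / (1 - x) := by
  have analytic_left : AnalyticOnNhd ℝ (fun x ↦ ₂F₁ b (b + 1 / 2) (2 * b) (landenMap x))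
      (Ico 0 1) := fun y hy ↦ by
    refine (analyticAt_ordinaryHypergeometric _ _ _ (abs_landenMap_lt_one hy)).comp ?_
    have one_add_sq_ne_zero : (1 + y) ^ 2 ≠ 0 := by have := hy.1; positivity
    unfold landenMap
    fun_prop (disch := assumption)
  have analytic_right : AnalyticOnNhd ℝ (fun x : ℝ ↦ (1 + x) ^ (2 * b) / (1 - x))
      (Ico 0 1) := fun y hy ↦ by
    have one_add_ne_zero : 1 + y ≠ 0 := by linarith [hy.1]
    have one_sub_ne_zero : 1 - y ≠ 0 := by linarith [hy.2]
    have analyticAt_rpow : AnalyticAt ℝ (fun t : ℝ ↦ t ^ (2 * b)) (1 + y) :=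
      (Real.contDiffAt_rpow_const_of_ne one_add_ne_zero).analyticAt
    exact (analyticAt_rpow.comp (by fun_prop)).div (by fun_prop) one_sub_ne_zero
  have eventually_small : ∀ᶠ y : ℝ in 𝓝 0, |y| < 1 ∧ 4 * |y| < (1 - |y|) ^ 2 := by
    refine Filter.Eventually.and ?_ ?_
    · exact (continuous_abs.tendsto' 0 0 abs_zero).eventually_lt_const one_pos
    · exact ContinuousAt.eventually_lt (by fun_prop) (by fun_prop) (by norm_num)
  exact analytic_left.eqOn_of_preconnected_of_eventuallyEq analytic_right isPreconnected_Ico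
    (Set.left_mem_Ico.2 one_pos) (eventually_small.mono fun y hy ↦
      ordinaryHypergeometric_landenMap_of_four_mul_abs_lt hb hy.1 hy.2) hx

end Landen

section BatemanIntegral

variable {a d : ℝ}

lemma ofReal_rpow_mul_one_sub_rpow {s : ℝ} (hs : s ∈ Ioo 0 1) :
    ((s ^ (a - 1) * (1 - s) ^ (d - 1) : ℝ) : ℂ) =
      (s : ℂ) ^ ((a : ℂ) - 1) * (1 - (s : ℂ)) ^ ((d : ℂ) - 1) := by
  rw [Complex.ofReal_mul, Complex.ofReal_cpow hs.1.le, Complex.ofReal_cpow (sub_nonneg.2 hs.2.le)]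
  push_cast
  rfl

lemma integrableOn_rpow_mul_one_sub_rpow (ha : 0 < a) (hd : 0 < d) :
    IntegrableOn (fun s : ℝ ↦ s ^ (a - 1) * (1 - s) ^ (d - 1)) (Ioo 0 1) := by
  have convergent := Complex.betaIntegral_convergent (u := a) (v := d) (by simpa) (by simpa)
  rw [intervalIntegrable_iff_integrableOn_Ioo_of_le zero_le_one] at convergent
  exact (convergent.congr_fun
    (fun s hs ↦ (ofReal_rpow_mul_one_sub_rpow hs).symm) measurableSet_Ioo).re

lemma integral_rpow_mul_one_sub_rpow (ha : 0 < a) (hd : 0 < d) :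
    ∫ s in Ioo 0 1, s ^ (a - 1) * (1 - s) ^ (d - 1) = ProbabilityTheory.beta a d := by
  rw [ProbabilityTheory.beta_eq_betaIntegralReal a d ha hd, Complex.betaIntegral,
    intervalIntegral.integral_of_le zero_le_one, integral_Ioc_eq_integral_Ioo,
    ← setIntegral_congr_fun measurableSet_Ioo fun s hs ↦ ofReal_rpow_mul_one_sub_rpow hs,
    integral_complex_ofReal, Complex.ofReal_re]

lemma beta_add_natCast (ha : 0 < a) (hd : 0 < d) (n : ℕ) :
    ProbabilityTheory.beta (a + n) d = ProbabilityTheory.beta a d *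
      ((ascPochhammer ℝ n).eval a / (ascPochhammer ℝ n).eval (a + d)) := by
  have ne_neg_natCast {t : ℝ} (ht : 0 < t) (k : ℕ) : t ≠ -k := by
    linarith [(k.cast_nonneg : (0 : ℝ) ≤ k)]
  rw [ProbabilityTheory.beta, ProbabilityTheory.beta, add_right_comm,
    gamma_add_natCast (ne_neg_natCast ha), gamma_add_natCast (ne_neg_natCast (add_pos ha hd))]
  ring

lemma integral_rpow_mul_one_sub_rpow_mul_pow (ha : 0 < a) (hd : 0 < d) (n : ℕ) :
    ∫ s in Ioo 0 1, s ^ (a - 1) * (1 - s) ^ (d - 1) * s ^ n = ProbabilityTheory.beta a d *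
      ((ascPochhammer ℝ n).eval a / (ascPochhammer ℝ n).eval (a + d)) := by
  rw [← beta_add_natCast ha hd, ← integral_rpow_mul_one_sub_rpow (by positivity) hd]
  refine setIntegral_congr_fun measurableSet_Ioo fun s hs ↦ ?_
  rw [add_sub_right_comm, Real.rpow_add_natCast hs.1.ne']
  ring

lemma hasSum_mul_setIntegral_mul_pow {k : ℝ → ℝ} (hk : IntegrableOn k (Ioo 0 1)) {c : ℕ → ℝ}
    (hc : Summable c) :
    HasSum (fun n ↦ c n * ∫ s in Ioo 0 1, k s * s ^ n)
      (∫ s in Ioo 0 1, k s * ∑' n, c n * s ^ n) := by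
  have pow_le_one {s : ℝ} (hs : s ∈ Ioo 0 1) (n : ℕ) : ‖s ^ n‖ ≤ 1 := by
    rw [Real.norm_of_nonneg (pow_nonneg hs.1.le n)]
    exact pow_le_one₀ hs.1.le hs.2.le
  simp only [← integral_const_mul]
  refine hasSum_integral_of_dominated_convergence (fun n s ↦ ‖c n‖ * ‖k s‖)
    (fun n ↦ (hk.aestronglyMeasurable.mul (continuous_pow n).aestronglyMeasurable).const_mul _)
    (fun n ↦ ?_) (.of_forall fun s ↦ hc.norm.mul_right _)
    (by simpa only [tsum_mul_right] using hk.norm.const_mul _) ?_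
  · filter_upwards [ae_restrict_mem measurableSet_Ioo] with s hs
    rw [norm_mul, norm_mul]
    exact mul_le_mul_of_nonneg_left (mul_le_of_le_one_right (norm_nonneg _) (pow_le_one hs n))
      (norm_nonneg _)
  · filter_upwards [ae_restrict_mem measurableSet_Ioo] with s hs
    have summable_mul_pow : Summable fun n ↦ c n * s ^ n :=
      .of_norm_bounded hc.norm fun n ↦ by
        rw [norm_mul]
        exact mul_le_of_le_one_right (norm_nonneg _) (pow_le_one hs n)
    exact (summable_mul_pow.hasSum.mul_left (k s)).congr_fun fun n ↦ by ring

theorem integral_rpow_mul_one_sub_rpow_mul_ordinaryHypergeometric (ha : 0 < a)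
    (hd : 0 < d) (p r : ℝ) {w : ℝ} (hw : |w| < 1) :
    ∫ s in Ioo 0 1, s ^ (a - 1) * (1 - s) ^ (d - 1) * ₂F₁ p (a + d) r (s * w) =
      ProbabilityTheory.beta a d * ₂F₁ p a r w := by
  have hasSum_integral := hasSum_mul_setIntegral_mul_pow
    (integrableOn_rpow_mul_one_sub_rpow ha hd)
    (hasSum_ordinaryHypergeometric p (a + d) r hw).summable
  have tsum_eq {s : ℝ} (hs : s ∈ Ioo 0 1) :
      ∑' n, ordinaryHypergeometricCoefficient p (a + d) r n * w ^ n * s ^ n =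
        ₂F₁ p (a + d) r (s * w) := by
    have abs_lt : |s * w| < 1 := by
      rw [abs_mul, abs_of_pos hs.1]
      exact mul_lt_one_of_nonneg_of_lt_one_left hs.1.le hs.2 hw.le
    rw [← (hasSum_ordinaryHypergeometric p (a + d) r abs_lt).tsum_eq]
    exact tsum_congr fun n ↦ by ring
  refine (setIntegral_congr_fun measurableSet_Ioo fun s hs ↦ by rw [tsum_eq hs]).trans
    (hasSum_integral.unique
      (((hasSum_ordinaryHypergeometric p a r hw).mul_left _).congr_fun fun n ↦ ?_))
  have ascPochhammer_ne_zero := (ascPochhammer_pos n (a + d) (add_pos ha hd)).ne'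
  rw [integral_rpow_mul_one_sub_rpow_mul_pow ha hd, ordinaryHypergeometricCoefficient,
    ordinaryHypergeometricCoefficient]
  generalize (ascPochhammer ℝ n).eval (a + d) = e at *
  field_simp

end BatemanIntegral

section Substitution

lemma setIntegral_Ioo_comp_landenMap_div {z : ℝ} (hz : z ∈ Ioo 0 1) (f : ℝ → ℝ) :
    ∫ s in Ioo 0 1, f s = ∫ x in Ioo 0 z,
      4 * (1 - x) / (1 + x) ^ 3 / landenMap z * f (landenMap x / landenMap z) := by
  have Icc_subset : Icc 0 z ⊆ Icc 0 1 := Set.Icc_subset_Icc_right hz.2.le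
  have landenMap_pos : 0 < landenMap z := by have := hz.1; rw [landenMap]; positivity
  have strictMonoOn : StrictMonoOn (fun x ↦ landenMap x / landenMap z) (Icc 0 z) :=
    fun x hx y hy hxy ↦ div_lt_div_of_pos_right
      (strictMonoOn_landenMap (Icc_subset hx) (Icc_subset hy) hxy) landenMap_pos
  have image_eq : (fun x ↦ landenMap x / landenMap z) '' Ioo 0 z = Ioo 0 1 := by
    have h := ContinuousOn.image_Ioo_of_strictMonoOn hz.1.le
      ((continuousOn_landenMap.mono Icc_subset).div_const _) strictMonoOn
    rw [h, div_self landenMap_pos.ne']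
    simp [landenMap]
  rw [← image_eq]
  exact integral_image_eq_integral_deriv_smul_of_monotoneOn measurableSet_Ioo
    (fun x hx ↦ ((hasDerivAt_landenMap (by linarith [hx.1])).div_const _).hasDerivWithinAt)
    (strictMonoOn.monotoneOn.mono Set.Ioo_subset_Icc_self) f

lemma div_pow_three_mul_rpow_eq {x v q : ℝ} (hx : x ∈ Ioo 0 1) (hv : 0 < v) (hq : 0 ≤ q)
    (a d : ℝ) :
    v * (1 - x) / (1 + x) ^ 3 * ((v * x / (1 + x) ^ 2) ^ (a - 1) * (q / (1 + x) ^ 2) ^ (d - 1) *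
      ((1 + x) ^ (2 * (a + d - 1 / 2)) / (1 - x))) = v ^ a * (x ^ (a - 1) * q ^ (d - 1)) := by
  have x_pos : 0 < x := hx.1
  have one_sub_ne_zero : 1 - x ≠ 0 := (sub_pos.2 hx.2).ne'
  have one_add_pos : 0 < 1 + x := by positivity
  have sq_rpow (t : ℝ) : ((1 + x) ^ 2) ^ t = (1 + x) ^ (2 * t) := by
    rw [Real.rpow_mul one_add_pos.le, Real.rpow_two]
  have one_add_rpow_eq : (1 + x) ^ (2 * (a + d - 1 / 2)) =
      (1 + x) ^ (2 * (a - 1)) * (1 + x) ^ (2 * (d - 1)) * (1 + x) ^ 3 := by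
    rw [← Real.rpow_add one_add_pos, ← Real.rpow_add_natCast one_add_pos.ne']
    ring_nf
  rw [Real.div_rpow (by positivity) (by positivity), Real.div_rpow hq (by positivity),
    Real.mul_rpow hv.le x_pos.le, sq_rpow, sq_rpow, one_add_rpow_eq, Real.rpow_sub_one hv.ne']
  have (t : ℝ) : (1 + x) ^ t ≠ 0 := (Real.rpow_pos_of_pos one_add_pos t).ne'
  field_simp

lemma two_mul_add_sub_half_ne_neg_natCast {a d : ℝ} (ha : 0 < a) (hd : 0 < d)
    (had : a + d ≠ 1 / 2) (k : ℕ) : 2 * (a + d - 1 / 2) ≠ -k := by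
  rcases k with - | k
  · grind
  · push_cast
    linarith [(k.cast_nonneg : (0 : ℝ) ≤ k)]

lemma quadratic_eq_sub_mul_one_div_sub {z u : ℝ} (hz : z ≠ 0) (hu : u = (1 + z) ^ 2 / (4 * z))
    (x : ℝ) : x ^ 2 + 2 * (1 - 2 * u) * x + 1 = (z - x) * (1 / z - x) := by
  rw [hu]
  field_simp
  ring

lemma landenMap_substitution_integrand_eq {a d z u x : ℝ} (ha : 0 < a) (hd : 0 < d)
    (had : a + d ≠ 1 / 2) (hz : z < 1) (hu : u = (1 + z) ^ 2 / (4 * z)) (hx : x ∈ Ioo 0 z) :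
    4 * (1 - x) / (1 + x) ^ 3 / landenMap z *
      ((landenMap x / landenMap z) ^ (a - 1) * (1 - landenMap x / landenMap z) ^ (d - 1) *
        ₂F₁ (a + d - 1 / 2) (a + d) (2 * (a + d - 1 / 2)) (landenMap x / landenMap z * landenMap z))
      = (4 * u) ^ a * (x ^ (a - 1) * (x ^ 2 + 2 * (1 - 2 * u) * x + 1) ^ (d - 1)) := by
  have hx1 : x ∈ Ioo 0 1 := ⟨hx.1, hx.2.trans hz⟩
  have z_pos : 0 < z := hx.1.trans hx.2
  have u_pos : 0 < u := by rw [hu]; positivity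
  have landenMap_z : landenMap z = 1 / u := by rw [landenMap, hu, one_div_div]
  have one_add_ne_zero : 1 + x ≠ 0 := by linarith [hx.1]
  have landenMap_div : landenMap x / landenMap z = 4 * u * x / (1 + x) ^ 2 := by
    rw [landenMap_z, landenMap]
    field_simp
  have one_sub_eq : 1 - 4 * u * x / (1 + x) ^ 2 =
      (x ^ 2 + 2 * (1 - 2 * u) * x + 1) / (1 + x) ^ 2 := by
    field_simp
    ring
  have quadratic_nonneg : 0 ≤ x ^ 2 + 2 * (1 - 2 * u) * x + 1 := by
    rw [quadratic_eq_sub_mul_one_div_sub z_pos.ne' hu]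
    have one_lt_one_div_z : 1 < 1 / z := one_lt_one_div z_pos hz
    exact mul_nonneg (by linarith [hx.2]) (by linarith [hx1.2])
  have landen := ordinaryHypergeometric_landenMap (two_mul_add_sub_half_ne_neg_natCast ha hd had)
    (Set.Ioo_subset_Ico_self hx1)
  rw [sub_add_cancel] at landen
  rw [div_mul_cancel₀ _ (by simp [landenMap_z, u_pos.ne']), landen, landenMap_div, one_sub_eq,
    ← div_pow_three_mul_rpow_eq hx1 (by positivity) quadratic_nonneg, landenMap_z]
  field_simp

theorem setIntegral_rpow_mul_quadratic_rpow {a d z u : ℝ} (ha : 0 < a) (hd : 0 < d)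
    (had : a + d ≠ 1 / 2) (hz : z ∈ Ioo 0 1) (hu : u = (1 + z) ^ 2 / (4 * z)) :
    ∫ x in Ioo 0 z, x ^ (a - 1) * (x ^ 2 + 2 * (1 - 2 * u) * x + 1) ^ (d - 1) =
      ProbabilityTheory.beta a d * (4 * u) ^ (-a) *
        ₂F₁ (a + d - 1 / 2) a (2 * (a + d - 1 / 2)) (1 / u) := by
  have four_mul_u_pos : 0 < 4 * u := by have := hz.1; rw [hu]; positivity
  have landenMap_z : landenMap z = 1 / u := by rw [landenMap, hu, one_div_div]
  have integral_eq := integral_rpow_mul_one_sub_rpow_mul_ordinaryHypergeometric ha hd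
    (a + d - 1 / 2) (2 * (a + d - 1 / 2)) (abs_landenMap_lt_one (Set.Ioo_subset_Ico_self hz))
  rw [setIntegral_Ioo_comp_landenMap_div hz, setIntegral_congr_fun measurableSet_Ioo
    fun x hx ↦ landenMap_substitution_integrand_eq ha hd had hz.2 hu hx, integral_const_mul,
    landenMap_z] at integral_eq
  rw [mul_right_comm, ← integral_eq, Real.rpow_neg four_mul_u_pos.le, mul_comm (_ ^ a),
    mul_inv_cancel_right₀ (Real.rpow_pos_of_pos four_mul_u_pos a).ne']

end Substitution

theorem hyp2F1_eq_ordinaryHypergeometric (a b c z : ℝ) : hyp2F1 a b c z = ₂F₁ a b c z := by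
  rw [ordinaryHypergeometric_eq_tsum, hyp2F1]
  refine tsum_congr fun n ↦ ?_
  simp only [rpoch, smul_eq_mul]
  ring

theorem statement18_general (β₁ β₂ z u : ℝ)
    (hβ₁ : β₁ ≠ 0) (hβ₂ : β₂ < 1) (hβ : 1 / 2 < β₁ + β₂)
    (hz0 : 0 < z) (hz1 : z < 1) (hu : u = (1 + z) ^ 2 / (4 * z)) :
    ∫ x in Set.Ioo 0 z,
        x ^ (β₁ + β₂ - 3 / 2) * (x ^ 2 + 2 * (1 - 2 * u) * x + 1) ^ (-β₂) =
      Real.Gamma (β₁ + β₂ - 1 / 2) * Real.Gamma (1 - β₂) / Real.Gamma (β₁ + 1 / 2) *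
      (4 * u) ^ (-(β₁ + β₂ - 1 / 2)) *
      hyp2F1 (β₁ + β₂ - 1 / 2) β₁ (2 * β₁) (1 / u) := by
  have exponents_add : β₁ + β₂ - 1 / 2 + (1 - β₂) = β₁ + 1 / 2 := by ring
  have h := setIntegral_rpow_mul_quadratic_rpow (a := β₁ + β₂ - 1 / 2) (d := 1 - β₂)
    (by linarith) (by linarith) (by rw [exponents_add]; simpa using hβ₁) ⟨hz0, hz1⟩ hu
  rw [ProbabilityTheory.beta, exponents_add, add_sub_cancel_right,
    ordinaryHypergeometric_comm β₁, ← hyp2F1_eq_ordinaryHypergeometric] at h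
  convert h using 5 <;> ring

/-- Fiberwise period integral of the non-isotrivial fibration, evaluated as a
Gauss hypergeometric function. -/
theorem statement18 (β₁ β₂ z u : ℝ)
    (hβ₁ : 0 < β₁) (hβ₂ : β₂ < 1) (hβ : 1 / 2 < β₁ + β₂)
    (hz0 : 0 < z) (hz1 : z < 1) (hu : u = (1 + z) ^ 2 / (4 * z)) :
    ∫ x in Set.Ioo 0 z,
        x ^ (β₁ + β₂ - 3 / 2) * (x ^ 2 + 2 * (1 - 2 * u) * x + 1) ^ (-β₂) =
      Real.Gamma (β₁ + β₂ - 1 / 2) * Real.Gamma (1 - β₂) / Real.Gamma (β₁ + 1 / 2) *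
      (4 * u) ^ (-(β₁ + β₂ - 1 / 2)) *
      hyp2F1 (β₁ + β₂ - 1 / 2) β₁ (2 * β₁) (1 / u) :=
  statement18_general β₁ β₂ z u hβ₁.ne' hβ₂ hβ hz0 hz1 hu
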